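/- Let N be a positive integer, 0 < s < t < 1, and m > 0. Every minimizer F for φ(m) is essentially bounded: there exists R > 0 such that |F ∖ B(0,R)| = 0. -/

import Mathlib

open MeasureTheory ENNReal

/-- Interaction energy `∫_A ∫_B |x-y|^{-(N+α)} dy dx` in `[0,∞]`. -/
noncomputable def interEnergy (N : ℕ) (α : ℝ)
    (A B : Set (EuclideanSpace ℝ (Fin N))) : ℝ≥0∞ :=
  ∫⁻ x in A, ∫⁻ y in B, ENNReal.ofReal (‖x - y‖ ^ (-((N : ℝ) + α))) ∂volume ∂volume

/-- The fractional `α`-perimeter `P_α(E) = ∫_E ∫_{Eᶜ} |x-y|^{-(N+α)} dy dx`. -/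
noncomputable def fracPer (N : ℕ) (α : ℝ) (E : Set (EuclideanSpace ℝ (Fin N))) : ℝ≥0∞ :=
  interEnergy N α E Eᶜ

/-- The free energy `F_{s,t}(E) = (1-t) P_t(E) - s P_s(E)`. -/
noncomputable def freeEnergy (N : ℕ) (s t : ℝ) (E : Set (EuclideanSpace ℝ (Fin N))) : ℝ :=
  (1 - t) * (fracPer N t E).toReal - s * (fracPer N s E).toReal

/-- `F` is a minimizer of the free energy `F_{s,t}` among measurable sets of volume `m`
with finite `t`-perimeter. -/
def IsMinimizer (N : ℕ) (s t m : ℝ) (F : Set (EuclideanSpace ℝ (Fin N))) : Prop :=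
  MeasurableSet F ∧ volume F = ENNReal.ofReal m ∧ fracPer N t F < ⊤ ∧
    ∀ E : Set (EuclideanSpace ℝ (Fin N)), MeasurableSet E →
      volume E = ENNReal.ofReal m → fracPer N t E < ⊤ →
      freeEnergy N s t F ≤ freeEnergy N s t E

open Set Filter Topology

lemma slint_smul (N : ℕ) {l : ℝ} (hl : 0 < l) (A : Set (EuclideanSpace ℝ (Fin N)))
    (f : EuclideanSpace ℝ (Fin N) → ℝ≥0∞) :
    ∫⁻ x in (fun x => l • x) '' A, f x = ENNReal.ofReal (l ^ N) * ∫⁻ x in A, f (l • x) := by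
  have he : MeasurableEmbedding (fun x : EuclideanSpace ℝ (Fin N) => l • x) :=
    (Homeomorph.smulOfNeZero l hl.ne').measurableEmbedding
  have hm := Measure.map_addHaar_smul (volume : Measure (EuclideanSpace ℝ (Fin N))) hl.ne'
  rw [finrank_euclideanSpace_fin] at hm
  have h1 : ∫⁻ x in A, f (l • x) =
      ∫⁻ x in (fun x => l • x) '' A, f x ∂(Measure.map (fun x => l • x) volume) := by
    rw [he.restrict_map, he.lintegral_map, preimage_image_eq _ he.injective]
  rw [h1, hm, Measure.restrict_smul, lintegral_smul_measure, smul_eq_mul, ← mul_assoc,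
    ← ENNReal.ofReal_mul (by positivity), abs_of_pos (by positivity),
    mul_inv_cancel₀ (by positivity), ENNReal.ofReal_one, one_mul]

lemma inter_smul (N : ℕ) (α : ℝ) {l : ℝ} (hl : 0 < l) (A B : Set (EuclideanSpace ℝ (Fin N))) :
    interEnergy N α ((fun x => l • x) '' A) ((fun x => l • x) '' B)
      = ENNReal.ofReal (l ^ ((N : ℝ) - α)) * interEnergy N α A B := by
  unfold interEnergy
  rw [slint_smul N hl]
  simp_rw [slint_smul N hl]
  have h : ∀ x y : EuclideanSpace ℝ (Fin N),
      ENNReal.ofReal (‖l • x - l • y‖ ^ (-((N : ℝ) + α)))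
        = ENNReal.ofReal (l ^ (-((N : ℝ) + α))) * ENNReal.ofReal (‖x - y‖ ^ (-((N : ℝ) + α))) := by
    intro x y
    rw [← smul_sub, norm_smul, Real.norm_of_nonneg hl.le,
      Real.mul_rpow hl.le (norm_nonneg _), ENNReal.ofReal_mul (by positivity)]
  simp_rw [h]
  simp_rw [lintegral_const_mul' _ _ ENNReal.ofReal_ne_top]
  rw [← mul_assoc, ← mul_assoc, ← ENNReal.ofReal_mul (by positivity),
    ← ENNReal.ofReal_mul (by positivity)]
  congr 2
  rw [← Real.rpow_natCast, ← Real.rpow_add hl, ← Real.rpow_add hl]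
  congr 1; ring

lemma kmeas (N : ℕ) (α : ℝ) : Measurable (fun p : EuclideanSpace ℝ (Fin N) × EuclideanSpace ℝ (Fin N) =>
    ENNReal.ofReal (‖p.1 - p.2‖ ^ (-((N : ℝ) + α)))) := by
  fun_prop

lemma inter_symm (N : ℕ) (α : ℝ) (A B : Set (EuclideanSpace ℝ (Fin N))) :
    interEnergy N α A B = interEnergy N α B A := by
  unfold interEnergy
  rw [lintegral_lintegral_swap (kmeas N α).aemeasurable]
  simp_rw [norm_sub_rev]

lemma inter_union_right (N : ℕ) (α : ℝ) (A B C : Set (EuclideanSpace ℝ (Fin N)))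
    (hC : MeasurableSet C) (h : Disjoint B C) :
    interEnergy N α A (B ∪ C) = interEnergy N α A B + interEnergy N α A C := by
  unfold interEnergy
  simp_rw [lintegral_union hC h]
  rw [lintegral_add_left]
  exact Measurable.lintegral_prod_right (f := fun x y : EuclideanSpace ℝ (Fin N) =>
    ENNReal.ofReal (‖x - y‖ ^ (-((N : ℝ) + α)))) (kmeas N α)

lemma inter_union_left (N : ℕ) (α : ℝ) (A B C : Set (EuclideanSpace ℝ (Fin N)))
    (hB : MeasurableSet B) (h : Disjoint A B) :
    interEnergy N α (A ∪ B) C = interEnergy N α A C + interEnergy N α B C := by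
  unfold interEnergy
  rw [lintegral_union hB h]

lemma tail_one (N : ℕ) {α : ℝ} (hα : 0 < α) :
    ∫⁻ y in {y : EuclideanSpace ℝ (Fin N) | 1 ≤ ‖y‖}, ENNReal.ofReal (‖y‖ ^ (-((N : ℝ) + α))) < ⊤ := by
  have h := finite_integral_one_add_norm (μ := (volume : Measure (EuclideanSpace ℝ (Fin N))))
    (r := (N : ℝ) + α) (by rw [finrank_euclideanSpace_fin]; linarith)
  have hms : MeasurableSet {y : EuclideanSpace ℝ (Fin N) | 1 ≤ ‖y‖} :=
    measurableSet_le measurable_const measurable_norm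
  calc _ ≤ ∫⁻ y in {y : EuclideanSpace ℝ (Fin N) | 1 ≤ ‖y‖},
        ENNReal.ofReal (2 ^ ((N : ℝ) + α)) * ENNReal.ofReal ((1 + ‖y‖) ^ (-((N : ℝ) + α))) := by
        apply setLIntegral_mono' hms
        intro y hy
        rw [← ENNReal.ofReal_mul (by positivity)]
        apply ENNReal.ofReal_le_ofReal
        have hy' : 1 ≤ ‖y‖ := hy
        have h3 : (2 * ‖y‖) ^ (-((N : ℝ) + α)) ≤ (1 + ‖y‖) ^ (-((N : ℝ) + α)) :=
          Real.rpow_le_rpow_of_nonpos (by positivity) (by linarith)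
            (by have : (0:ℝ) ≤ N := by positivity
                linarith)
        rw [Real.mul_rpow (by norm_num) (by positivity)] at h3
        calc ‖y‖ ^ (-((N : ℝ) + α)) = 2 ^ ((N : ℝ) + α) * (2 ^ (-((N : ℝ) + α)) * ‖y‖ ^ (-((N : ℝ) + α))) := by
              rw [← mul_assoc, ← Real.rpow_add (by norm_num)]; simp
          _ ≤ _ := by gcongr
    _ ≤ ∫⁻ y : EuclideanSpace ℝ (Fin N),
        ENNReal.ofReal (2 ^ ((N : ℝ) + α)) * ENNReal.ofReal ((1 + ‖y‖) ^ (-((N : ℝ) + α))) :=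
        setLIntegral_le_lintegral _ _
    _ < ⊤ := by
        rw [lintegral_const_mul' _ _ ENNReal.ofReal_ne_top]
        exact ENNReal.mul_lt_top ENNReal.ofReal_lt_top h

lemma tail (N : ℕ) {α : ℝ} (hα : 0 < α) : ∃ C : ℝ, 0 < C ∧
    ∀ ρ : ℝ, 0 < ρ → ∀ x : EuclideanSpace ℝ (Fin N),
    ∫⁻ y in {y | ρ ≤ ‖x - y‖}, ENNReal.ofReal (‖x - y‖ ^ (-((N : ℝ) + α)))
      ≤ ENNReal.ofReal (C * ρ ^ (-α)) := by
  have h1 := tail_one N hα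
  set T := ∫⁻ y in {y : EuclideanSpace ℝ (Fin N) | 1 ≤ ‖y‖}, ENNReal.ofReal (‖y‖ ^ (-((N : ℝ) + α))) with hT
  refine ⟨T.toReal + 1, by positivity, fun ρ hρ x => ?_⟩
  have hms : ∀ ρ : ℝ, MeasurableSet {y : EuclideanSpace ℝ (Fin N) | ρ ≤ ‖y‖} := fun ρ =>
    measurableSet_le measurable_const measurable_norm
  have hms' : MeasurableSet {y : EuclideanSpace ℝ (Fin N) | ρ ≤ ‖x - y‖} := 
    measurableSet_le measurable_const (by fun_prop)
  have e1 : ∫⁻ y in {y | ρ ≤ ‖x - y‖}, ENNReal.ofReal (‖x - y‖ ^ (-((N : ℝ) + α)))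
      = ∫⁻ y in {y : EuclideanSpace ℝ (Fin N) | ρ ≤ ‖y‖}, ENNReal.ofReal (‖y‖ ^ (-((N : ℝ) + α))) := by
    rw [← lintegral_indicator (hms ρ), ← lintegral_indicator hms',
      ← lintegral_sub_left_eq_self ({y : EuclideanSpace ℝ (Fin N) | ρ ≤ ‖y‖}.indicator _) x]
    rfl
  have e2 : {y : EuclideanSpace ℝ (Fin N) | ρ ≤ ‖y‖} = (fun x => ρ • x) '' {y | 1 ≤ ‖y‖} := by
    ext y
    constructor
    · intro hy
      refine ⟨ρ⁻¹ • y, ?_, by simp [smul_smul, hρ.ne']⟩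
      have hy' : ρ ≤ ‖y‖ := hy
      simp only [mem_ofPred_eq, norm_smul, norm_inv, Real.norm_of_nonneg hρ.le]
      rw [inv_mul_eq_div, le_div_iff₀ hρ]; linarith
    · rintro ⟨z, hz, rfl⟩
      have hz' : 1 ≤ ‖z‖ := hz
      simp only [mem_ofPred_eq, norm_smul, Real.norm_of_nonneg hρ.le]
      nlinarith
  rw [e1, e2, slint_smul N hρ]
  have h : ∀ y : EuclideanSpace ℝ (Fin N),
      ENNReal.ofReal (‖ρ • y‖ ^ (-((N : ℝ) + α)))
        = ENNReal.ofReal (ρ ^ (-((N : ℝ) + α))) * ENNReal.ofReal (‖y‖ ^ (-((N : ℝ) + α))) := by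
    intro y
    rw [norm_smul, Real.norm_of_nonneg hρ.le,
      Real.mul_rpow hρ.le (norm_nonneg _), ENNReal.ofReal_mul (by positivity)]
  simp_rw [h]
  rw [lintegral_const_mul' _ _ ENNReal.ofReal_ne_top, ← hT, ← mul_assoc, ← ENNReal.ofReal_mul (by positivity),
    ← Real.rpow_natCast, ← Real.rpow_add hρ, ← ENNReal.ofReal_toReal h1.ne, 
    ← ENNReal.ofReal_mul (by positivity)]
  apply ENNReal.ofReal_le_ofReal
  rw [show (N:ℝ) + -((N:ℝ)+α) = -α by ring, mul_comm, ENNReal.toReal_ofReal (by positivity)]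
  gcongr
  linarith

lemma interp (N : ℕ) {s t : ℝ} (hs : 0 < s) (hst : s < t) {δ : ℝ} (hδ : 0 < δ) :
    ∃ C : ℝ, 0 < C ∧ ∀ X Y : Set (EuclideanSpace ℝ (Fin N)),
      interEnergy N s X Y ≤ ENNReal.ofReal (δ ^ (t - s)) * interEnergy N t X Y
        + ENNReal.ofReal C * volume X := by
  obtain ⟨C, hC, h⟩ := tail N hs
  refine ⟨C * δ ^ (-s), by positivity, fun X Y => ?_⟩
  unfold interEnergy
  rw [← lintegral_const_mul' _ _ ENNReal.ofReal_ne_top, ← setLIntegral_const, 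
    ← lintegral_add_right _ measurable_const]
  apply lintegral_mono
  intro x
  have hms' : MeasurableSet {y : EuclideanSpace ℝ (Fin N) | δ ≤ ‖x - y‖} := 
    measurableSet_le measurable_const (by fun_prop)
  dsimp only
  rw [← lintegral_const_mul' _ _ ENNReal.ofReal_ne_top]
  calc _ ≤ ∫⁻ y in Y, (ENNReal.ofReal (δ ^ (t - s)) * ENNReal.ofReal (‖x - y‖ ^ (-((N : ℝ) + t)))
        + {y : EuclideanSpace ℝ (Fin N) | δ ≤ ‖x - y‖}.indicator
          (fun y => ENNReal.ofReal (‖x - y‖ ^ (-((N : ℝ) + s)))) y) := by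
        apply lintegral_mono
        intro y
        dsimp only
        by_cases hy : δ ≤ ‖x - y‖
        · rw [indicator_of_mem (by exact hy)]
          exact le_add_self
        · refine le_trans ?_ le_self_add
          rw [← ENNReal.ofReal_mul (by positivity)]
          apply ENNReal.ofReal_le_ofReal
          push Not at hy
          rcases eq_or_lt_of_le (norm_nonneg (x - y)) with h0 | h0
          · rw [← h0, Real.zero_rpow (by have : (0:ℝ) ≤ N := by positivity
                                         linarith)]
            positivity
          · rw [show (-((N:ℝ) + s)) = (t - s) + (-((N:ℝ) + t)) by ring, Real.rpow_add h0]
            gcongr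
    _ = _ := lintegral_add_right _ (Measurable.indicator (by fun_prop) hms')
    _ ≤ _ := by
        gcongr
        refine le_trans (setLIntegral_le_lintegral _ _) ?_
        rw [lintegral_indicator hms']
        exact h δ hδ x

lemma iso (N : ℕ) (hN : 0 < N) {t : ℝ} (ht0 : 0 < t) (htN : t < 1) :
    ∃ c : ℝ, 0 < c ∧ ∀ D : Set (EuclideanSpace ℝ (Fin N)), MeasurableSet D → volume D ≠ ⊤ →
      ENNReal.ofReal (c * (volume D).toReal ^ (1 - t / N)) ≤ interEnergy N t D Dᶜ := by
  have hNr : (1:ℝ) ≤ N := by exact_mod_cast hN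
  set w := (volume (Metric.ball (0 : EuclideanSpace ℝ (Fin N)) 1)).toReal with hw
  have hwf : volume (Metric.ball (0 : EuclideanSpace ℝ (Fin N)) 1) ≠ ⊤ := measure_ball_lt_top.ne
  have hw0 : 0 < w := ENNReal.toReal_pos (Metric.measure_ball_pos _ _ one_pos).ne' hwf
  refine ⟨(2 / w) ^ (-1 - t / N), by positivity, fun D hD hDf => ?_⟩
  set u := (volume D).toReal with hu
  have hvD : volume D = ENNReal.ofReal u := (ENNReal.ofReal_toReal hDf).symm
  have hu0 : 0 ≤ u := ENNReal.toReal_nonneg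
  have hγ : 0 < 1 - t / N := by
    have : t / N < 1 := by rw [div_lt_one (by positivity)]; linarith
    linarith
  rcases eq_or_lt_of_le hu0 with h0 | h0
  · rw [← h0, Real.zero_rpow hγ.ne']; simp
  set ρ := (2 * u / w) ^ (1 / (N:ℝ)) with hρ
  have hρ0 : 0 < ρ := by positivity
  have hρN : ρ ^ N = 2 * u / w := by
    rw [hρ, ← Real.rpow_natCast, ← Real.rpow_mul (by positivity), one_div, inv_mul_cancel₀ (by positivity),
      Real.rpow_one]
  have hpt : ∀ x : EuclideanSpace ℝ (Fin N), ENNReal.ofReal (ρ ^ (-((N:ℝ) + t)) * u) ≤ 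
      ∫⁻ y in Dᶜ, ENNReal.ofReal (‖x - y‖ ^ (-((N : ℝ) + t))) := by
    intro x
    have hS : MeasurableSet ((Metric.ball x ρ \ D) \ {x}) := 
      (measurableSet_ball.diff hD).diff (measurableSet_singleton x)
    have hN' : Nonempty (Fin N) := ⟨⟨0, hN⟩⟩
    have hvS : ENNReal.ofReal u ≤ volume ((Metric.ball x ρ \ D) \ {x}) := by
      rw [measure_sdiff_null (measure_singleton x)]
      refine le_trans ?_ (le_measure_sdiff)
      rw [Measure.addHaar_ball_of_pos _ _ hρ0, finrank_euclideanSpace_fin, hρN, hvD,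
        ← ENNReal.ofReal_toReal hwf, ← hw, ← ENNReal.ofReal_mul (by positivity), 
        ← ENNReal.ofReal_sub _ hu0]
      apply ENNReal.ofReal_le_ofReal
      rw [div_mul_cancel₀ _ hw0.ne']; linarith
    calc ENNReal.ofReal (ρ ^ (-((N:ℝ) + t)) * u) = ENNReal.ofReal (ρ ^ (-((N:ℝ) + t))) * ENNReal.ofReal u :=
          ENNReal.ofReal_mul (by positivity)
      _ ≤ ENNReal.ofReal (ρ ^ (-((N:ℝ) + t))) * volume ((Metric.ball x ρ \ D) \ {x}) := by gcongr
      _ = ∫⁻ y in ((Metric.ball x ρ \ D) \ {x}), ENNReal.ofReal (ρ ^ (-((N:ℝ) + t))) := 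
          (setLIntegral_const _ _).symm
      _ ≤ ∫⁻ y in ((Metric.ball x ρ \ D) \ {x}), ENNReal.ofReal (‖x - y‖ ^ (-((N : ℝ) + t))) := by
          apply setLIntegral_mono' hS
          intro y hy
          apply ENNReal.ofReal_le_ofReal
          have h1 : ‖x - y‖ < ρ := by
            have := hy.1.1
            rwa [Metric.mem_ball, dist_eq_norm, norm_sub_rev] at this
          have h2 : 0 < ‖x - y‖ := by
            rw [norm_pos_iff, sub_ne_zero]
            intro h
            exact hy.2 h.symm
          exact Real.rpow_le_rpow_of_nonpos h2 h1.le (by linarith)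
      _ ≤ _ := lintegral_mono_set (fun y hy => hy.1.2)
  calc ENNReal.ofReal ((2 / w) ^ (-1 - t / N) * u ^ (1 - t / N)) 
      = ENNReal.ofReal (ρ ^ (-((N:ℝ) + t)) * u) * ENNReal.ofReal u := by
        rw [← ENNReal.ofReal_mul (by positivity)]
        congr 1
        rw [hρ, ← Real.rpow_mul (by positivity), show 2 * u / w = (2 / w) * u by ring,
          Real.mul_rpow (by positivity) hu0]
        have e : 1 / (N:ℝ) * -((N:ℝ) + t) = -1 - t / N := by field_simp; ring
        rw [e, show (1 - t / (N:ℝ)) = (-1 - t / N) + 1 + 1 by ring, Real.rpow_add h0,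
          Real.rpow_add h0, Real.rpow_one]
        ring
    _ = ∫⁻ x in D, ENNReal.ofReal (ρ ^ (-((N:ℝ) + t)) * u) := by rw [setLIntegral_const, hvD]
    _ ≤ _ := lintegral_mono (fun x => hpt x)

set_option maxHeartbeats 1000000 in
lemma compar (N : ℕ) (hN : 0 < N) (s t : ℝ) (hs : 0 < s) (hst : s < t) (ht : t < 1)
    (m : ℝ) (hm : 0 < m) (F : Set (EuclideanSpace ℝ (Fin N)))
    (hF : IsMinimizer N s t m F) : ∃ C : ℝ, 0 < C ∧ ∀ r : ℝ,
      (volume (F \ Metric.ball (0 : EuclideanSpace ℝ (Fin N)) r)).toReal ≤ m / 2 →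
      interEnergy N t (F \ Metric.ball 0 r) Fᶜ ≤ ENNReal.ofReal C *
        (interEnergy N t (F ∩ Metric.ball 0 r) (F \ Metric.ball 0 r) 
          + volume (F \ Metric.ball (0 : EuclideanSpace ℝ (Fin N)) r)) := by
  obtain ⟨hFm, hFv, hFt, hmin⟩ := hF
  have hNr : (1:ℝ) ≤ N := by exact_mod_cast hN
  have h1t : 0 < 1 - t := by linarith
  set δ := ((1 - t) / (2 * s)) ^ (1 / (t - s)) with hδ
  have hδ0 : 0 < δ := by positivity
  have hδe : δ ^ (t - s) = (1 - t) / (2 * s) := by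
    rw [hδ, ← Real.rpow_mul (by positivity), one_div, inv_mul_cancel₀ (by linarith), Real.rpow_one]
  obtain ⟨K, hK, hint⟩ := interp N hs hst hδ0
  rw [hδe] at hint
  have hfin : ∀ X Y : Set (EuclideanSpace ℝ (Fin N)), volume X ≠ ⊤ → interEnergy N t X Y ≠ ⊤ →
      interEnergy N s X Y ≠ ⊤ := by
    intro X Y h1 h2
    exact ne_top_of_le_ne_top (ENNReal.add_ne_top.2 ⟨ENNReal.mul_ne_top ENNReal.ofReal_ne_top h2,
      ENNReal.mul_ne_top ENNReal.ofReal_ne_top h1⟩) (hint X Y)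
  set P := (fracPer N t F).toReal with hP
  have hP0 : 0 ≤ P := ENNReal.toReal_nonneg
  refine ⟨2 * s * K / (1 - t) + 4 * P / m + 4, by positivity, fun r hr => ?_⟩
  set D := F \ Metric.ball (0 : EuclideanSpace ℝ (Fin N)) r with hD
  set A := F ∩ Metric.ball (0 : EuclideanSpace ℝ (Fin N)) r with hA
  have hDm : MeasurableSet D := hFm.diff measurableSet_ball
  have hAm : MeasurableSet A := hFm.inter measurableSet_ball
  have hAD : Disjoint A D := by
    rw [Set.disjoint_left]; intro x h1 h2; exact h2.2 h1.2
  have hFe : F = A ∪ D := by rw [hA, hD, inter_union_sdiff]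
  have hAc : Aᶜ = Fᶜ ∪ D := by
    ext x
    simp only [hA, hD, mem_compl_iff, mem_inter_iff, mem_union, Set.mem_sdiff]; tauto
  have hFcD : Disjoint Fᶜ D := by
    rw [Set.disjoint_left]; intro x h1 h2; exact h1 h2.1
  by_cases hi : interEnergy N t A D = ⊤
  · rw [hi, top_add, ENNReal.mul_top (by simp; positivity)]; exact le_top
  have hFvf : volume F ≠ ⊤ := by rw [hFv]; exact ENNReal.ofReal_ne_top
  have hDf : volume D ≠ ⊤ := ne_top_of_le_ne_top hFvf (measure_mono sdiff_subset)
  have hAf : volume A ≠ ⊤ := ne_top_of_le_ne_top hFvf (measure_mono inter_subset_left)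
  set u := (volume D).toReal with hu
  have hu0 : 0 ≤ u := ENNReal.toReal_nonneg
  have hPF : ∀ α, fracPer N α F = interEnergy N α A Fᶜ + interEnergy N α D Fᶜ := by
    intro α
    rw [fracPer, ← inter_union_left N α A D Fᶜ hDm hAD, ← hFe]
  have hPA : ∀ α, fracPer N α A = interEnergy N α A Fᶜ + interEnergy N α A D := by
    intro α
    rw [fracPer, hAc, inter_union_right N α A Fᶜ D hDm hFcD]
  have hsum := hPF t ▸ hFt.ne
  have haf : interEnergy N t A Fᶜ ≠ ⊤ := (ENNReal.add_ne_top.1 hsum).1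
  have hbf : interEnergy N t D Fᶜ ≠ ⊤ := (ENNReal.add_ne_top.1 hsum).2
  have haf' := hfin _ _ hAf haf
  have hbf' := hfin _ _ hDf hbf
  have hif' := hfin _ _ hAf hi
  set a := (interEnergy N t A Fᶜ).toReal with ha
  set b := (interEnergy N t D Fᶜ).toReal with hb
  set i := (interEnergy N t A D).toReal with hii
  set a' := (interEnergy N s A Fᶜ).toReal with ha'
  set b' := (interEnergy N s D Fᶜ).toReal with hb'
  set i' := (interEnergy N s A D).toReal with hii'
  have ha0 : 0 ≤ a := ENNReal.toReal_nonneg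
  have hb0 : 0 ≤ b := ENNReal.toReal_nonneg
  have hi0 : 0 ≤ i := ENNReal.toReal_nonneg
  have ha'0 : 0 ≤ a' := ENNReal.toReal_nonneg
  have hi'0 : 0 ≤ i' := ENNReal.toReal_nonneg
  have hPab : P = a + b := by rw [hP, hPF, ENNReal.toReal_add haf hbf]
  have hvA : volume A = ENNReal.ofReal (m - u) := by
    have h1 : volume F = volume A + volume D := by
      conv_lhs => rw [hFe]
      exact measure_union hAD hDm
    have h2 := congrArg ENNReal.toReal h1
    rw [hFv, ENNReal.toReal_add hAf hDf, ENNReal.toReal_ofReal hm.le] at h2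
    rw [← ENNReal.ofReal_toReal hAf]
    congr 1; linarith
  have hmu : 0 < m - u := by linarith
  set l := (m / (m - u)) ^ (1 / (N:ℝ)) with hl
  have hq1 : 1 ≤ m / (m - u) := by rw [le_div_iff₀ hmu]; linarith
  have hl1 : 1 ≤ l := Real.one_le_rpow hq1 (by positivity)
  have hl0 : 0 < l := by linarith
  have hlN : l ^ N = m / (m - u) := by
    rw [hl, ← Real.rpow_natCast, ← Real.rpow_mul (by positivity), one_div, inv_mul_cancel₀ (by positivity),
      Real.rpow_one]
  have hemb : MeasurableEmbedding (fun x : EuclideanSpace ℝ (Fin N) => l • x) :=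
    (Homeomorph.smulOfNeZero l hl0.ne').measurableEmbedding
  have hbij : Function.Bijective (fun x : EuclideanSpace ℝ (Fin N) => l • x) :=
    (Homeomorph.smulOfNeZero l hl0.ne').bijective
  set E := (fun x : EuclideanSpace ℝ (Fin N) => l • x) '' A with hE
  have hEm : MeasurableSet E := hemb.measurableSet_image.2 hAm
  have hEv : volume E = ENNReal.ofReal m := by
    have := slint_smul N hl0 A (fun _ => 1)
    rw [setLIntegral_one, setLIntegral_one, hvA, hlN, ← ENNReal.ofReal_mul (by positivity),
      div_mul_cancel₀ _ hmu.ne'] at this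
    exact this
  have hPE : ∀ α, fracPer N α E = ENNReal.ofReal (l ^ ((N:ℝ) - α)) * fracPer N α A := by
    intro α
    rw [fracPer, hE, ← image_compl_eq hbij, inter_smul N α hl0]; rfl
  have hEt : fracPer N t E < ⊤ := by
    rw [hPE, hPA]
    exact ENNReal.mul_lt_top ENNReal.ofReal_lt_top (ENNReal.add_lt_top.2 ⟨haf.lt_top, lt_top_iff_ne_top.2 hi⟩)
  have key := hmin E hEm hEv hEt
  unfold freeEnergy at key
  rw [hPE, hPE, hPA, hPA, hPF, hPF, ENNReal.toReal_mul, ENNReal.toReal_mul, ENNReal.toReal_add haf hbf,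
    ENNReal.toReal_add haf' hbf', ENNReal.toReal_add haf hi, ENNReal.toReal_add haf' hif',
    ENNReal.toReal_ofReal (by positivity), ENNReal.toReal_ofReal (by positivity),
    ← ha, ← hb, ← hii, ← ha', ← hb', ← hii'] at key
  have hL : l ^ ((N:ℝ) - t) ≤ 1 + 2 * u / m := by
    calc l ^ ((N:ℝ) - t) ≤ l ^ (N:ℝ) := Real.rpow_le_rpow_of_exponent_le hl1 (by linarith)
      _ = m / (m - u) := by rw [Real.rpow_natCast, hlN]
      _ ≤ _ := by
        rw [div_le_iff₀ hmu]
        have : (1 + 2 * u / m) * (m - u) = m + u * (m - 2 * u) / m := by field_simp; ring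
        rw [this]
        have : 0 ≤ u * (m - 2 * u) / m := div_nonneg (mul_nonneg hu0 (by linarith)) hm.le
        linarith
  have hL' : 1 ≤ l ^ ((N:ℝ) - s) := Real.one_le_rpow hl1 (by linarith)
  have hbb : b' ≤ (1 - t) / (2 * s) * b + K * u := by
    have := ENNReal.toReal_mono (ENNReal.add_ne_top.2 ⟨ENNReal.mul_ne_top ENNReal.ofReal_ne_top hbf,
      ENNReal.mul_ne_top ENNReal.ofReal_ne_top hDf⟩) (hint D Fᶜ)
    rwa [ENNReal.toReal_add (ENNReal.mul_ne_top ENNReal.ofReal_ne_top hbf)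
      (ENNReal.mul_ne_top ENNReal.ofReal_ne_top hDf), ENNReal.toReal_mul, ENNReal.toReal_mul,
      ENNReal.toReal_ofReal (by positivity), ENNReal.toReal_ofReal (by positivity)] at this
  have k1 : (1 - t) * (l ^ ((N:ℝ) - t) * (a + i)) ≤ (1 - t) * ((1 + 2 * u / m) * (a + i)) := by gcongr
  have k2 : s * a' ≤ s * (l ^ ((N:ℝ) - s) * (a' + i')) := by
    gcongr
    nlinarith
  have k3 : s * b' ≤ (1 - t) / 2 * b + s * K * u := by
    calc s * b' ≤ s * ((1 - t) / (2 * s) * b + K * u) := by gcongr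
      _ = _ := by field_simp
  have k4 : 2 * u / m * (a + i) ≤ 2 * u / m * P + i := by
    have h1 : 2 * u / m ≤ 1 := by rw [div_le_one hm]; linarith
    have h2 : 2 * u / m * a ≤ 2 * u / m * P := by gcongr; linarith
    nlinarith
  have k5 : (1 - t) * b ≤ (1 - t) / 2 * b + s * K * u + (1 - t) * (2 * i + 2 * u / m * P) := by
    have : (1 - t) * ((1 + 2 * u / m) * (a + i)) ≤ (1 - t) * (a + i + (2 * u / m * P + i)) := by
      gcongr; linarith
    have e3 : (1 - t) * (a + i + (2 * u / m * P + i)) = (1 - t) * a + (1 - t) * (2 * i + 2 * u / m * P) := by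
      ring
    have e4 : (1 - t) * (a + b) = (1 - t) * a + (1 - t) * b := by ring
    have e5 : s * (a' + b') = s * a' + s * b' := by ring
    linarith
  have k6 : b ≤ (2 * s * K / (1 - t) + 4 * P / m + 4) * (i + u) := by
    have e : b ≤ (2 * s * K / (1 - t) + 4 * P / m) * u + 4 * i := by
      have : (1 - t) / 2 * b ≤ (1 - t) / 2 * ((2 * s * K / (1 - t) + 4 * P / m) * u + 4 * i) := by
        have e2 : (1 - t) / 2 * ((2 * s * K / (1 - t) + 4 * P / m) * u + 4 * i) = 
          s * K * u + (1 - t) * (2 * i + 2 * u / m * P) := by field_simp; ring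
        rw [e2]; linarith
      exact le_of_mul_le_mul_left this (by linarith)
    have h7 : 0 ≤ (2 * s * K / (1 - t) + 4 * P / m) * i := by positivity
    have h8 : (2 * s * K / (1 - t) + 4 * P / m + 4) * (i + u) = (2 * s * K / (1 - t) + 4 * P / m) * u
      + (2 * s * K / (1 - t) + 4 * P / m) * i + 4 * i + 4 * u := by ring
    rw [h8]
    linarith
  rw [← ENNReal.ofReal_toReal hbf, ← ENNReal.ofReal_toReal hi, ← ENNReal.ofReal_toReal hDf,
    ← ENNReal.ofReal_add hi0 hu0, ← ENNReal.ofReal_mul (by positivity)]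
  exact ENNReal.ofReal_le_ofReal k6

lemma oned {t : ℝ} (ht0 : 0 < t) (ht : t < 1) {h : ℝ} (hh : 0 < h) (v R : ℝ) :
    ∫⁻ r in Ioc R (R + h), (Iic v).indicator (fun r => (ENNReal.ofReal (v - r)) ^ (-t)) r
      ≤ ENNReal.ofReal ((1 / (1 - t) + 1) * h ^ (1 - t)) := by
  have h1t : 0 < 1 - t := by linarith
  set G : ℝ → ℝ≥0∞ := (Icc 0 h).indicator (fun u => (ENNReal.ofReal u) ^ (-t)) with hG
  have hGi : ∫⁻ u, G u = ENNReal.ofReal (h ^ (1 - t) / (1 - t)) := by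
    rw [hG, lintegral_indicator measurableSet_Icc, ← restrict_Ioc_eq_restrict_Icc]
    have e : ∫⁻ u in Ioc 0 h, (ENNReal.ofReal u) ^ (-t) = ∫⁻ u in Ioc 0 h, ENNReal.ofReal (u ^ (-t)) := by
      apply setLIntegral_congr_fun measurableSet_Ioc
      intro u hu
      exact ENNReal.ofReal_rpow_of_pos hu.1
    rw [e, ← ofReal_integral_eq_lintegral_ofReal]
    · rw [← intervalIntegral.integral_of_le hh.le, integral_rpow (Or.inl (by linarith)),
        Real.zero_rpow (by linarith)]
      congr 1
      rw [show -t + 1 = 1 - t by ring, sub_zero]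
    · exact (intervalIntegral.intervalIntegrable_rpow' (by linarith)).1
    · filter_upwards [ae_restrict_mem measurableSet_Ioc] with u hu
      exact Real.rpow_nonneg hu.1.le _
  calc _ ≤ ∫⁻ r in Ioc R (R + h), (G (v - r) + ENNReal.ofReal (h ^ (-t))) := by
        apply lintegral_mono
        intro r
        dsimp only
        by_cases hr : r ≤ v
        · rw [indicator_of_mem (by exact hr)]
          by_cases h2 : v - r ≤ h
          · refine le_trans ?_ le_self_add
            rw [hG, indicator_of_mem (by exact ⟨by linarith, h2⟩)]
          · refine le_trans ?_ le_add_self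
            push Not at h2
            rw [ENNReal.ofReal_rpow_of_pos (by linarith)]
            apply ENNReal.ofReal_le_ofReal
            exact Real.rpow_le_rpow_of_nonpos hh h2.le (by linarith)
        · rw [indicator_of_notMem (by exact hr)]
          exact zero_le
    _ = (∫⁻ r in Ioc R (R + h), G (v - r)) + ENNReal.ofReal (h ^ (-t)) * ENNReal.ofReal h := by
        rw [lintegral_add_right _ measurable_const, setLIntegral_const, Real.volume_Ioc]
        congr 3; ring
    _ ≤ (∫⁻ r, G (v - r)) + ENNReal.ofReal (h ^ (-t)) * ENNReal.ofReal h := by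
        gcongr
        exact Measure.restrict_le_self
    _ = _ := by
        rw [lintegral_sub_left_eq_self G v, hGi, ← ENNReal.ofReal_mul (by positivity),
          ← ENNReal.ofReal_add (by positivity) (by positivity)]
        congr 1
        have : h ^ (1 - t) = h ^ (-t) * h := by
          rw [show 1 - t = -t + 1 by ring, Real.rpow_add hh, Real.rpow_one]
        rw [← this]; ring

lemma integ (N : ℕ) {t : ℝ} (ht0 : 0 < t) (ht : t < 1) : ∃ C : ℝ, 0 < C ∧
    ∀ F : Set (EuclideanSpace ℝ (Fin N)), MeasurableSet F → ∀ R h : ℝ, 0 < h →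
    ∫⁻ r in Ioc R (R + h), interEnergy N t (F \ Metric.ball 0 r) (F ∩ Metric.ball 0 r)
      ≤ ENNReal.ofReal (C * h ^ (1 - t)) * volume (F \ Metric.ball 0 R) := by
  have h1t : 0 < 1 - t := by linarith
  obtain ⟨C, hC, htail⟩ := tail N ht0
  refine ⟨C * (1 / (1 - t) + 1), by positivity, fun F hFm R h hh => ?_⟩
  set g : ℝ → EuclideanSpace ℝ (Fin N) → ℝ≥0∞ := fun r x =>
    (Iic ‖x‖).indicator (fun r => (ENNReal.ofReal (‖x‖ - r)) ^ (-t)) r with hg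
  have hgm : Measurable (Function.uncurry g) := by
    have : Function.uncurry g = {p : ℝ × EuclideanSpace ℝ (Fin N) | p.1 ≤ ‖p.2‖}.indicator
        (fun p => (ENNReal.ofReal (‖p.2‖ - p.1)) ^ (-t)) := by
      ext p; rfl
    rw [this]
    exact Measurable.indicator (by fun_prop) (measurableSet_le (by fun_prop) (by fun_prop))
  have hin : ∀ r x, x ∈ F \ Metric.ball (0 : EuclideanSpace ℝ (Fin N)) r →
      ∫⁻ y in F ∩ Metric.ball 0 r, ENNReal.ofReal (‖x - y‖ ^ (-((N : ℝ) + t)))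
        ≤ ENNReal.ofReal C * g r x := by
    intro r x hx
    have hrx : r ≤ ‖x‖ := by
      have := hx.2
      rwa [mem_ball_zero_iff, not_lt] at this
    have : g r x = (ENNReal.ofReal (‖x‖ - r)) ^ (-t) := indicator_of_mem (by exact hrx) _
    rw [this]
    rcases eq_or_lt_of_le hrx with h0 | h0
    · rw [h0, sub_self, ENNReal.ofReal_zero, ENNReal.zero_rpow_of_neg (by linarith),
        ENNReal.mul_top (by simpa using hC)]
      exact le_top
    · rw [ENNReal.ofReal_rpow_of_pos (by linarith), ← ENNReal.ofReal_mul hC.le]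
      refine le_trans (lintegral_mono_set ?_) (htail (‖x‖ - r) (by linarith) x)
      intro y hy
      have h1 := hy.2
      rw [mem_ball_zero_iff] at h1
      have h2 := norm_sub_norm_le x y
      show ‖x‖ - r ≤ ‖x - y‖
      linarith
  calc _ ≤ ∫⁻ r in Ioc R (R + h), ∫⁻ x in F \ Metric.ball 0 R, ENNReal.ofReal C * g r x := by
        apply setLIntegral_mono' measurableSet_Ioc
        intro r hr
        unfold interEnergy
        refine le_trans (setLIntegral_mono' (hFm.diff measurableSet_ball) (hin r)) ?_
        apply lintegral_mono_set
        exact sdiff_subset_sdiff_right (Metric.ball_subset_ball hr.1.le)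
    _ = ∫⁻ x in F \ Metric.ball 0 R, ∫⁻ r in Ioc R (R + h), ENNReal.ofReal C * g r x := by
        apply lintegral_lintegral_swap
        exact (hgm.const_mul _).aemeasurable
    _ ≤ ∫⁻ x in F \ Metric.ball 0 R, ENNReal.ofReal (C * (1 / (1 - t) + 1) * h ^ (1 - t)) := by
        apply lintegral_mono
        intro x
        dsimp only
        rw [lintegral_const_mul' _ _ ENNReal.ofReal_ne_top, mul_assoc, ENNReal.ofReal_mul hC.le]
        gcongr
        exact oned ht0 ht hh ‖x‖ R
    _ = _ := setLIntegral_const _ _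

lemma iter (f : ℝ → ℝ) (hf0 : ∀ r, 0 ≤ f r) (hanti : Antitone f) (hlim : Tendsto f atTop (𝓝 0))
    {t γ C R0 : ℝ} (hγ0 : 0 < γ) (hγ : γ < 1) (hC : 0 < C)
    (H : ∀ R h, R0 ≤ R → 0 < h → f (R + h) ^ γ ≤ C * h ^ (-t) * f R) :
    ∃ R, 0 < R ∧ f R = 0 := by
  have h1 : 0 < 1 - γ := by linarith
  set b : ℝ := (2:ℝ) ^ (-|t|) with hb
  have hb0 : 0 < b := by positivity
  -- q with 2^|t| q^(1-γ) ≤ 1 and q < 1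
  set q : ℝ := (2:ℝ) ^ (-(|t| + 1) / (1 - γ)) with hq
  have hq0 : 0 < q := by positivity
  have hq1 : q < 1 := by
    apply Real.rpow_lt_one_of_one_lt_of_neg (by norm_num)
    apply div_neg_of_neg_of_pos _ h1
    have := abs_nonneg t
    linarith
  have hqe : q ^ (1 - γ) = (2:ℝ) ^ (-(|t| + 1)) := by
    rw [hq, ← Real.rpow_mul (by norm_num), div_mul_cancel₀ _ h1.ne']
  set ε : ℝ := (q ^ γ / C) ^ (1 / (1 - γ)) with hε
  have hε0 : 0 < ε := by positivity
  have hεe : ε ^ (1 - γ) = q ^ γ / C := by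
    rw [hε, ← Real.rpow_mul (by positivity), one_div, inv_mul_cancel₀ h1.ne', Real.rpow_one]
  obtain ⟨R, hR⟩ := ((hlim.eventually (gt_mem_nhds hε0)).and (eventually_ge_atTop (max R0 1))).exists
  have hRR0 : R0 ≤ R := le_trans (le_max_left _ _) hR.2
  have hR1 : 1 ≤ R := le_trans (le_max_right _ _) hR.2
  have claim : ∀ k : ℕ, f (R + 2 - 2 * (1 / 2) ^ k) ≤ ε * q ^ k := by
    intro k
    induction k with
    | zero => simpa using hR.1.le
    | succ k ih =>
      have hp : (0:ℝ) < (1 / 2) ^ k := by positivity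
      have hp1 : ((1:ℝ) / 2) ^ k ≤ 1 := pow_le_one₀ (by norm_num) (by norm_num)
      have h2 := H (R + 2 - 2 * (1 / 2) ^ k) ((1 / 2) ^ k) (by linarith) hp
      rw [show R + 2 - 2 * (1 / 2 : ℝ) ^ k + (1 / 2) ^ k = R + 2 - 2 * (1 / 2) ^ (k + 1) by ring] at h2
      have h3 : f (R + 2 - 2 * (1 / 2) ^ (k + 1)) ^ γ ≤ (ε * q ^ (k + 1)) ^ γ := by
        have hpt : (((1:ℝ) / 2) ^ k) ^ (-t) ≤ ((2:ℝ) ^ (|t|)) ^ k := by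
          calc (((1:ℝ) / 2) ^ k) ^ (-t) ≤ (((1:ℝ) / 2) ^ k) ^ (-|t|) :=
                Real.rpow_le_rpow_of_exponent_ge hp hp1 (by linarith [le_abs_self t])
            _ = _ := by
              rw [one_div, inv_pow, Real.inv_rpow (by positivity), Real.rpow_neg (by positivity), inv_inv,
                ← Real.rpow_natCast, ← Real.rpow_natCast, ← Real.rpow_mul (by norm_num),
                ← Real.rpow_mul (by norm_num), mul_comm]
        have hsm : (2:ℝ) ^ |t| * q ^ (1 - γ) ≤ 1 := by
          rw [hqe, ← Real.rpow_add (by norm_num)]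
          apply Real.rpow_le_one_of_one_le_of_nonpos (by norm_num)
          linarith
        have hεs : ε = ε ^ γ * ε ^ (1 - γ) := by
          rw [← Real.rpow_add hε0]; simp
        have hqs : q ^ k = (q ^ γ) ^ k * (q ^ (1 - γ)) ^ k := by
          rw [← mul_pow, ← Real.rpow_add hq0]; simp
        calc _ ≤ C * (((1:ℝ) / 2) ^ k) ^ (-t) * f (R + 2 - 2 * (1 / 2) ^ k) := h2
          _ ≤ C * ((2:ℝ) ^ (|t|)) ^ k * (ε * q ^ k) := by
            have hff := hf0 (R + 2 - 2 * (1 / 2) ^ k)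
            gcongr
          _ = C * ((2:ℝ) ^ (|t|)) ^ k * ((ε ^ γ * (q ^ γ / C)) * ((q ^ γ) ^ k * (q ^ (1 - γ)) ^ k)) := by
            rw [← hεe, ← hεs, ← hqs]
          _ = (((2:ℝ) ^ |t|) * q ^ (1 - γ)) ^ k * (ε ^ γ * (q ^ γ) ^ (k + 1)) := by
            rw [mul_pow, pow_succ]; field_simp
          _ ≤ 1 * (ε ^ γ * (q ^ γ) ^ (k + 1)) := by
            gcongr
            exact pow_le_one₀ (by positivity) hsm
          _ = (ε * q ^ (k + 1)) ^ γ := by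
            rw [one_mul, Real.mul_rpow hε0.le (by positivity), Real.rpow_pow_comm hq0.le]
      exact (Real.rpow_le_rpow_iff (hf0 _) (by positivity) hγ0).1 h3
  refine ⟨R + 2, by linarith, le_antisymm ?_ (hf0 _)⟩
  have hl : Tendsto (fun k : ℕ => ε * q ^ k) atTop (𝓝 0) := by
    have := (tendsto_pow_atTop_nhds_zero_of_lt_one hq0.le hq1).const_mul ε
    simpa using this
  apply ge_of_tendsto' hl
  intro k
  refine le_trans (hanti ?_) (claim k)
  have hp : (0:ℝ) < (1 / 2) ^ k := by positivity
  linarith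

/-- Every volume-constrained minimizer is essentially bounded. -/
theorem stmt11 (N : ℕ) (hN : 0 < N) (s t : ℝ) (hs : 0 < s) (hst : s < t) (ht : t < 1)
    (m : ℝ) (hm : 0 < m) (F : Set (EuclideanSpace ℝ (Fin N)))
    (hF : IsMinimizer N s t m F) :
    ∃ R : ℝ, 0 < R ∧
      volume (F \ Metric.ball (0 : EuclideanSpace ℝ (Fin N)) R) = 0 := by
  have hNr : (1:ℝ) ≤ N := by exact_mod_cast hN
  have ht0 : 0 < t := by linarith
  obtain ⟨C1, hC1, hcomp⟩ := compar N hN s t hs hst ht m hm F hF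
  obtain ⟨c, hc, hiso⟩ := iso N hN ht0 ht
  obtain ⟨C2, hC2, hinteg⟩ := integ N ht0 ht
  obtain ⟨hFm, hFv, hFt, -⟩ := hF
  have hFvf : volume F ≠ ⊤ := by rw [hFv]; exact ENNReal.ofReal_ne_top
  set f : ℝ → ℝ := fun r => (volume (F \ Metric.ball (0 : EuclideanSpace ℝ (Fin N)) r)).toReal with hf
  have hDf : ∀ r, volume (F \ Metric.ball (0 : EuclideanSpace ℝ (Fin N)) r) ≠ ⊤ := fun r =>
    ne_top_of_le_ne_top hFvf (measure_mono sdiff_subset)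
  have hfv : ∀ r, volume (F \ Metric.ball (0 : EuclideanSpace ℝ (Fin N)) r) = ENNReal.ofReal (f r) :=
    fun r => (ENNReal.ofReal_toReal (hDf r)).symm
  have hf0 : ∀ r, 0 ≤ f r := fun r => ENNReal.toReal_nonneg
  have hsub : Antitone (fun r => F \ Metric.ball (0 : EuclideanSpace ℝ (Fin N)) r) := fun r r' h =>
    sdiff_subset_sdiff_right (Metric.ball_subset_ball h)
  have hanti : Antitone f := fun r r' h => ENNReal.toReal_mono (hDf r) (measure_mono (hsub h))
  have hlim : Tendsto f atTop (𝓝 0) := by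
    have h1 := tendsto_measure_iInter_atTop (μ := volume)
      (s := fun r => F \ Metric.ball (0 : EuclideanSpace ℝ (Fin N)) r)
      (fun r => (hFm.diff measurableSet_ball).nullMeasurableSet) hsub ⟨0, hDf 0⟩
    have h2 : (⋂ r : ℝ, F \ Metric.ball (0 : EuclideanSpace ℝ (Fin N)) r) = ∅ := by
      rw [eq_empty_iff_forall_notMem]
      intro x hx
      have := (mem_iInter.1 hx (‖x‖ + 1)).2
      apply this
      rw [mem_ball_zero_iff]; linarith
    rw [h2, measure_empty] at h1
    have := (ENNReal.tendsto_toReal ENNReal.zero_ne_top).comp h1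
    rw [ENNReal.toReal_zero] at this
    exact this
  set γ : ℝ := 1 - t / N with hγ
  have htN : 0 < t / N := by positivity
  have htN1 : t / N < 1 := by rw [div_lt_one (by positivity)]; linarith
  -- threshold
  set η : ℝ := (c / (2 * C1)) ^ (1 / (t / N)) with hη
  have hη0 : 0 < η := by positivity
  have hηe : η ^ (t / N) = c / (2 * C1) := by
    rw [hη, ← Real.rpow_mul (by positivity), one_div, inv_mul_cancel₀ htN.ne', Real.rpow_one]
  obtain ⟨R0, hR0⟩ := eventually_atTop.1 ((hlim.eventually (gt_mem_nhds hη0)).and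
    (hlim.eventually (gt_mem_nhds (half_pos hm))))
  have hpt : ∀ r, R0 ≤ r → ENNReal.ofReal (c / 2 * f r ^ γ) ≤ ENNReal.ofReal (C1 + 1) *
      interEnergy N t (F \ Metric.ball 0 r) (F ∩ Metric.ball 0 r) := by
    intro r hr
    obtain ⟨h1, h2⟩ := hR0 r hr
    have hcp := hcomp r h2.le
    have his := hiso (F \ Metric.ball 0 r) (hFm.diff measurableSet_ball) (hDf r)
    have hset : (F \ Metric.ball (0 : EuclideanSpace ℝ (Fin N)) r)ᶜ = Fᶜ ∪ (F ∩ Metric.ball 0 r) := by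
      ext x
      simp only [mem_compl_iff, mem_inter_iff, mem_union, Set.mem_sdiff]; tauto
    rw [hset, inter_union_right N t _ _ _ (hFm.inter measurableSet_ball)
      (by rw [Set.disjoint_left]; intro x h1 h2; exact h1 h2.1)] at his
    rw [inter_symm N t (F ∩ Metric.ball 0 r)] at hcp
    set I := interEnergy N t (F \ Metric.ball 0 r) (F ∩ Metric.ball 0 r) with hI
    have hab : C1 * f r ≤ c / 2 * f r ^ γ := by
      rcases eq_or_lt_of_le (hf0 r) with h0 | h0
      · rw [← h0, mul_zero]; positivity
      have e : f r = f r ^ γ * f r ^ (t / N) := by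
        rw [← Real.rpow_add h0, hγ]; simp
      have e2 : f r ^ (t / N) ≤ c / (2 * C1) := by
        rw [← hηe]; exact Real.rpow_le_rpow h0.le h1.le htN.le
      calc C1 * f r = C1 * (f r ^ γ * f r ^ (t / N)) := by rw [← e]
        _ ≤ C1 * (f r ^ γ * (c / (2 * C1))) := by gcongr
        _ = _ := by field_simp
    have h5 : ENNReal.ofReal (c / 2 * f r ^ γ) + ENNReal.ofReal (c / 2 * f r ^ γ) ≤
        ENNReal.ofReal (C1 + 1) * I + ENNReal.ofReal (c / 2 * f r ^ γ) := by
      have hp : 0 ≤ f r ^ γ := Real.rpow_nonneg (hf0 r) _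
      calc _ = ENNReal.ofReal (c * f r ^ γ) := by
            rw [← ENNReal.ofReal_add (by positivity) (by positivity)]; congr 1; ring
        _ ≤ _ := his
        _ ≤ ENNReal.ofReal C1 * (I + ENNReal.ofReal (f r)) + I := by
            rw [← hfv r]; gcongr
        _ = ENNReal.ofReal (C1 + 1) * I + ENNReal.ofReal (C1 * f r) := by
            rw [ENNReal.ofReal_add hC1.le one_pos.le, ENNReal.ofReal_one, ENNReal.ofReal_mul hC1.le]; ring
        _ ≤ _ := by gcongr
    exact (ENNReal.add_le_add_iff_right ENNReal.ofReal_ne_top).1 h5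
  have H : ∀ R h, R0 ≤ R → 0 < h → f (R + h) ^ γ ≤ (2 * (C1 + 1) * C2 / c) * h ^ (-t) * f R := by
    intro R h hR hh
    have hp : 0 ≤ f (R + h) ^ γ := Real.rpow_nonneg (hf0 _) _
    have h1 : ENNReal.ofReal (c / 2 * f (R + h) ^ γ) * ENNReal.ofReal h ≤
        ENNReal.ofReal (C1 + 1) * (ENNReal.ofReal (C2 * h ^ (1 - t)) * ENNReal.ofReal (f R)) := by
      calc _ = ∫⁻ r in Ioc R (R + h), ENNReal.ofReal (c / 2 * f (R + h) ^ γ) := by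
            rw [setLIntegral_const, Real.volume_Ioc]; congr 2; ring
        _ ≤ ∫⁻ r in Ioc R (R + h), ENNReal.ofReal (C1 + 1) *
              interEnergy N t (F \ Metric.ball 0 r) (F ∩ Metric.ball 0 r) := by
            apply setLIntegral_mono' measurableSet_Ioc
            intro r hr
            refine le_trans ?_ (hpt r (by linarith [hr.1]))
            apply ENNReal.ofReal_le_ofReal
            have := hanti hr.2
            have := Real.rpow_le_rpow (hf0 _) this (show 0 ≤ γ by linarith)
            gcongr
        _ = ENNReal.ofReal (C1 + 1) * ∫⁻ r in Ioc R (R + h), 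
              interEnergy N t (F \ Metric.ball 0 r) (F ∩ Metric.ball 0 r) :=
            lintegral_const_mul' _ _ ENNReal.ofReal_ne_top
        _ ≤ _ := by
            rw [← hfv R]; gcongr
            exact hinteg F hFm R h hh
    rw [← ENNReal.ofReal_mul (by positivity), ← ENNReal.ofReal_mul (by positivity),
      ← ENNReal.ofReal_mul (by positivity), ENNReal.ofReal_le_ofReal_iff
        (by have := hf0 R; positivity)] at h1
    have e : h ^ (1 - t) = h ^ (-t) * h := by
      rw [show 1 - t = -t + 1 by ring, Real.rpow_add hh, Real.rpow_one]
    rw [e] at h1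
    have h2 : (c / 2 * h) * f (R + h) ^ γ ≤ (c / 2 * h) * ((2 * (C1 + 1) * C2 / c) * h ^ (-t) * f R) := by
      calc _ = c / 2 * f (R + h) ^ γ * h := by ring
        _ ≤ _ := h1
        _ = _ := by field_simp
    exact le_of_mul_le_mul_left h2 (by positivity)
  obtain ⟨R, hR, hfR⟩ := iter f hf0 hanti hlim (by linarith : 0 < γ) (by linarith) (by positivity) H
  refine ⟨R, hR, ?_⟩
  rw [hfv R, hfR, ENNReal.ofReal_zero]
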